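/- The class 𝒜 of all subsets of X^ω having the Automatic Baire property is a Boolean algebra: if F and G have the Automatic Baire property, then so do F ∪ G, F ∩ G and X^ω \ F. -/

import Mathlib

open Set MeasureTheory Computability

namespace AutoBaire

/-- The Cantor topology on the space of ω-words over `X`:
the product of the discrete topology on `X`. -/
def cantorTop (X : Type) : TopologicalSpace (ℕ → X) :=
  @Pi.topologicalSpace ℕ (fun _ => X) (fun _ => ⊥)

/-- The Borel σ-algebra of the Cantor space. -/
def cantorBorel (X : Type) : MeasurableSpace (ℕ → X) :=
  @borel (ℕ → X) (cantorTop X)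

variable {X : Type}

/-- Concatenation `w·ξ` of a finite word with an ω-word. -/
def wcat (w : List X) (ξ : ℕ → X) : ℕ → X :=
  Stream'.appendStream' w ξ

/-- The ball (cylinder) `w·X^ω`. -/
def cyl (w : List X) : Set (ℕ → X) := {ξ | ∃ η : ℕ → X, ξ = wcat w η}

/-- The ω-language `W·A` for a language `W` and an ω-language `A`. -/
def catOmega (W : Language X) (A : Set (ℕ → X)) : Set (ℕ → X) :=
  {ξ | ∃ w ∈ W, ∃ η ∈ A, ξ = wcat w η}

/-- `V^ω`: the set of ω-words that are infinite concatenations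
`v₁·v₂·⋯` of non-empty words `vᵢ ∈ V`. -/
def omegaPow (V : Language X) : Set (ℕ → X) :=
  {ξ | ∃ f : ℕ → List X, (∀ i, f i ∈ V ∧ f i ≠ []) ∧
    ∀ k, ξ ∈ cyl (((List.range k).map f).flatten)}

/-- Regular languages: those obtained from finite languages via the operations
union, concatenation and star. -/
inductive IsRegLang : Language X → Prop
  | finite (W : Language X) : (W : Set (List X)).Finite → IsRegLang W
  | union (W V : Language X) : IsRegLang W → IsRegLang V → IsRegLang (W + V)
  | concat (W V : Language X) : IsRegLang W → IsRegLang V → IsRegLang (W * V)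
  | star (W : Language X) : IsRegLang W → IsRegLang (W∗)

/-- Regular ω-languages: finite unions `⋃ᵢ Wᵢ·Vᵢ^ω` with `Wᵢ, Vᵢ` regular. -/
def IsRegOmega (F : Set (ℕ → X)) : Prop :=
  ∃ (n : ℕ) (W V : Fin n → Language X),
    (∀ i, IsRegLang (W i) ∧ IsRegLang (V i)) ∧
    F = ⋃ i, catOmega (W i) (omegaPow (V i))

/-- `X*·w·X^ω`: the set of ω-words containing `w` as an infix. -/
def infixOcc (w : List X) : Set (ℕ → X) :=
  {ξ | ∃ u : List X, ξ ∈ cyl (u ++ w)}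

/-- An ω-word is disjunctive if every finite word occurs in it as an infix. -/
def Disjunctive (ξ : ℕ → X) : Prop := ∀ w : List X, ξ ∈ infixOcc w

/-- Ultimately periodic ω-words: `ξ = w·v·v·v·⋯` with `v ≠ e`. -/
def UltPeriodic (ξ : ℕ → X) : Prop :=
  ∃ (w v : List X) (h : v ≠ []), ξ = wcat w (Stream'.cycle v h)

/-- The Automatic Baire property: `F Δ E ⊆ F'` for some regular open
ω-language `E` and some regular ω-language `F'` of first Baire category. -/
def HasABP (F : Set (ℕ → X)) : Prop :=
  ∃ E F' : Set (ℕ → X),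
    IsRegOmega E ∧ @IsOpen _ (cantorTop X) E ∧
    IsRegOmega F' ∧ @IsMeagre _ (cantorTop X) F' ∧
    symmDiff F E ⊆ F'

/-- The measure is finite and non-null: `0 < μ(X^ω) < ∞`. -/
def FiniteNonNull (μ : @MeasureTheory.Measure (ℕ → X) (cantorBorel X)) : Prop :=
  0 < μ Set.univ ∧ μ Set.univ < ⊤

/-- `supp(μ) = X^ω`: every non-empty open set has positive measure. -/
def FullSupport (μ : @MeasureTheory.Measure (ℕ → X) (cantorBorel X)) : Prop :=
  ∀ U : Set (ℕ → X), @IsOpen _ (cantorTop X) U → U.Nonempty → 0 < μ U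

/-- The balance condition: there is `c > 0` such that for all `w ∈ X*`, `x ∈ X`
either `μ(wx·X^ω) = 0` or `c·μ(w·X^ω) ≤ μ(wx·X^ω)`. -/
def Balanced (μ : @MeasureTheory.Measure (ℕ → X) (cantorBorel X)) : Prop :=
  ∃ c : ENNReal, 0 < c ∧ ∀ (w : List X) (x : X),
    μ (cyl (w ++ [x])) = 0 ∨ c * μ (cyl w) ≤ μ (cyl (w ++ [x]))



/-! ### Finite words -/

theorem kstar_append {W : Language X} {u v : List X} (hu : u ∈ W∗) (hv : v ∈ W∗) :
    u ++ v ∈ W∗ := by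
  rw [Language.mem_kstar] at *
  obtain ⟨L, rfl, hL⟩ := hu
  obtain ⟨M, rfl, hM⟩ := hv
  refine ⟨L ++ M, by simp, ?_⟩
  intro y hy
  rcases List.mem_append.1 hy with h | h
  · exact hL y h
  · exact hM y h

theorem kstar_single {W : Language X} {u : List X} (hu : u ∈ W) : u ∈ W∗ := by
  rw [Language.mem_kstar]
  exact ⟨[u], by simp, by simpa using hu⟩

theorem star_split {W : Language X} (L : List (List X)) (hL : ∀ y ∈ L, y ∈ W) :
    ∀ w y : List X, L.flatten = w ++ y → 
      (y = [] ∧ w ∈ W∗) ∨ ∃ u v, w = u ++ v ∧ u ∈ W∗ ∧ y ∈ W.leftQuotient v * W∗ := by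
  induction L with
  | nil =>
    intro w y h
    have h' : w = [] ∧ y = [] := by simpa [eq_comm] using h
    left
    exact ⟨h'.2, h'.1 ▸ Language.nil_mem_kstar _⟩
  | cons a L ih =>
    intro w y h
    have ha : a ∈ W := hL a (by simp)
    have hL' : ∀ y ∈ L, y ∈ W := fun y hy => hL y (by simp [hy])
    rw [List.flatten_cons, List.append_eq_append_iff] at h
    rcases h with ⟨c, rfl, hc⟩ | ⟨c, rfl, rfl⟩
    · rcases ih hL' c y hc with ⟨h1, h2⟩ | ⟨u, v, rfl, hu, hy⟩
      · exact Or.inl ⟨h1, kstar_append (kstar_single ha) h2⟩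
      · exact Or.inr ⟨a ++ u, v, by simp, kstar_append (kstar_single ha) hu, hy⟩
    · right
      refine ⟨[], w, rfl, Language.nil_mem_kstar _, ?_⟩
      exact Language.append_mem_mul ha (Language.join_mem_kstar hL')

def lunion (T : Set (Language X)) : Language X := {x | ∃ q ∈ T, x ∈ q}

theorem mem_lunion {T : Set (Language X)} {x : List X} : x ∈ lunion T ↔ ∃ q ∈ T, x ∈ q := Iff.rfl

theorem finite_quot {W : Language X} (h : IsRegLang W) :
    (Set.range W.leftQuotient).Finite := by
  induction h with
  | finite W hW =>
    have hS : ({y | ∃ x ∈ (W : Set (List X)), y ∈ {z | z ∈ x.tails}} : Set (List X)).Finite := by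
      have := hW.biUnion (t := fun x : List X => {z | z ∈ x.tails})
        (fun x _ => List.finite_toSet _)
      refine this.subset ?_
      rintro y ⟨x, hx, hy⟩
      simp only [Set.mem_iUnion]
      exact ⟨x, hx, hy⟩
    refine hS.finite_subsets.subset ?_
    rintro _ ⟨w, rfl⟩ y hy
    refine ⟨w ++ y, hy, ?_⟩
    simp
  | union W V _ _ hW hV =>
    refine (Set.Finite.image2 (fun a b : Language X => a + b) hW hV).subset ?_
    rintro _ ⟨w, rfl⟩
    exact ⟨_, ⟨w, rfl⟩, _, ⟨w, rfl⟩, rfl⟩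
  | concat W V _ _ hW hV =>
    refine (Set.Finite.image2 (fun (a : Language X) (T : Set (Language X)) => a * V + lunion T)
      hW hV.finite_subsets).subset ?_
    rintro _ ⟨w, rfl⟩
    refine ⟨_, ⟨w, rfl⟩, {q | ∃ u v, w = u ++ v ∧ u ∈ W ∧ q = V.leftQuotient v}, ?_, ?_⟩
    · rintro _ ⟨u, v, _, _, rfl⟩
      exact ⟨v, rfl⟩
    · ext y
      simp only [Language.mem_add, mem_lunion, Language.mem_leftQuotient, Language.mem_mul]
      constructor
      · rintro (⟨a, ha, b, hb, rfl⟩ | ⟨q, ⟨u, v, rfl, hu, rfl⟩, hy⟩)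
        · exact ⟨w ++ a, ha, b, hb, by simp⟩
        · exact ⟨u, hu, v ++ y, hy, by simp⟩
      · rintro ⟨a, ha, b, hb, h⟩
        rw [List.append_eq_append_iff] at h
        rcases h with ⟨c, rfl, rfl⟩ | ⟨c, rfl, rfl⟩
        · exact Or.inr ⟨_, ⟨a, c, rfl, ha, rfl⟩, hb⟩
        · exact Or.inl ⟨c, ha, b, hb, rfl⟩
  | star W _ hW =>
    refine (Set.Finite.image2 (fun (a : Language X) (T : Set (Language X)) => a + lunion T * W∗)
      (Set.toFinite {0, 1}) hW.finite_subsets).subset ?_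
    rintro _ ⟨w, rfl⟩
    classical
    refine ⟨if w ∈ W∗ then 1 else 0, by split_ifs <;> simp,
      {q | ∃ u v, w = u ++ v ∧ u ∈ W∗ ∧ q = W.leftQuotient v}, ?_, ?_⟩
    · rintro _ ⟨u, v, _, _, rfl⟩
      exact ⟨v, rfl⟩
    · ext y
      simp only [Language.mem_add, Language.mem_leftQuotient]
      constructor
      · rintro (h | h)
        · split_ifs at h with hw
          · rw [Language.mem_one] at h
            subst h
            simpa using hw
          · exact absurd h (Language.notMem_zero _)
        · rw [Language.mem_mul] at h
          obtain ⟨a, ⟨q, ⟨u, v, rfl, hu, rfl⟩, ha⟩, b, hb, rfl⟩ := h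
          have := kstar_append hu (kstar_append (kstar_single ha) hb)
          simpa using this
      · intro h
        obtain ⟨L, hL, hL'⟩ := Language.mem_kstar.1 h
        rcases star_split L hL' w y hL.symm with ⟨rfl, h2⟩ | ⟨u, v, rfl, hu, hy⟩
        · left
          rw [if_pos h2]
          rfl
        · right
          rw [Language.mem_mul] at hy ⊢
          obtain ⟨a, ha, b, hb, rfl⟩ := hy
          exact ⟨a, ⟨_, ⟨u, v, rfl, hu, rfl⟩, ha⟩, b, hb, rfl⟩

/-! ### Kleene -/

def Pth {σ : Type} (δ : σ → X → σ) (S : Set σ) : σ → List X → σ → Prop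
  | p, [], q => p = q
  | p, x :: w, q => (w = [] ∧ δ p x = q) ∨ (δ p x ∈ S ∧ Pth δ S (δ p x) w q)

def PL {σ : Type} (δ : σ → X → σ) (S : Set σ) (p q : σ) : Language X := {w | Pth δ S p w q}

theorem mem_PL {σ : Type} {δ : σ → X → σ} {S : Set σ} {p q : σ} {w : List X} :
    w ∈ PL δ S p q ↔ Pth δ S p w q := Iff.rfl

theorem Pth_mono {σ : Type} {δ : σ → X → σ} {S T : Set σ} (h : S ⊆ T) (w : List X) :
    ∀ p q, Pth δ S p w q → Pth δ T p w q := by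
  induction w with
  | nil => intro p q h; exact h
  | cons x w ih =>
    rintro p q (h1 | ⟨h1, h2⟩)
    · exact Or.inl h1
    · exact Or.inr ⟨h h1, ih _ _ h2⟩

theorem Pth_append {σ : Type} {δ : σ → X → σ} {T : Set σ} {k q : σ} (hk : k ∈ T) (v : List X)
    (hv : Pth δ T k v q) (u : List X) :
    ∀ p, Pth δ T p u k → Pth δ T p (u ++ v) q := by
  induction u with
  | nil => intro p h; cases h; exact hv
  | cons x u ih =>
    rintro p (⟨rfl, rfl⟩ | ⟨h1, h2⟩)
    · exact Or.inr ⟨hk, hv⟩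
    · exact Or.inr ⟨h1, ih _ h2⟩

theorem Pth_star {σ : Type} {δ : σ → X → σ} {T : Set σ} {k : σ} (hk : k ∈ T)
    (L : List (List X)) (hL : ∀ y ∈ L, Pth δ T k y k) : Pth δ T k L.flatten k := by
  induction L with
  | nil => rfl
  | cons a L ih =>
    rw [List.flatten_cons]
    exact Pth_append hk _ (ih fun y hy => hL y (by simp [hy])) _ _ (hL a (by simp))

theorem PL_insert {σ : Type} (δ : σ → X → σ) (S : Set σ) (k p q : σ) :
    PL δ (insert k S) p q = PL δ S p q + PL δ S p k * (PL δ S k k)∗ * PL δ S k q := by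
  ext w
  rw [Language.mem_add]
  constructor
  · intro h
    rw [mem_PL] at h
    induction w generalizing p with
    | nil => exact Or.inl h
    | cons x w ih =>
      rcases h with h | ⟨h1, h2⟩
      · exact Or.inl (Or.inl h)
      · rcases ih _ h2 with h3 | h3
        · rcases h1 with h1 | h1
          · right
            rw [h1] at h3
            exact Language.append_mem_mul (a := [x] ++ [])
              (Language.append_mem_mul (Or.inl ⟨rfl, h1⟩) (Language.nil_mem_kstar _)) h3
          · exact Or.inl (Or.inr ⟨h1, h3⟩)
        · right
          obtain ⟨ab, hab, c, hc, rfl⟩ := Language.mem_mul.1 h3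
          obtain ⟨a, ha, b, hb, rfl⟩ := Language.mem_mul.1 hab
          rcases h1 with h1 | h1
          · rw [h1] at ha
            have := Language.append_mem_mul (a := [x] ++ (a ++ b))
              (Language.append_mem_mul (l := PL δ S p k) (Or.inl ⟨rfl, h1⟩)
                (kstar_append (kstar_single ha) hb)) hc
            simpa using this
          · have := Language.append_mem_mul (a := (x :: a) ++ b)
              (Language.append_mem_mul (l := PL δ S p k) (Or.inr ⟨h1, ha⟩) hb) hc
            simpa using this
  · have hs : S ⊆ insert k S := Set.subset_insert _ _
    have hk : k ∈ insert k S := Set.mem_insert _ _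
    rintro (h | h)
    · exact Pth_mono hs _ _ _ h
    · obtain ⟨ab, hab, c, hc, rfl⟩ := Language.mem_mul.1 h
      obtain ⟨a, ha, b, hb, rfl⟩ := Language.mem_mul.1 hab
      obtain ⟨L, rfl, hL⟩ := Language.mem_kstar.1 hb
      rw [List.append_assoc]
      refine Pth_append hk _ (Pth_append hk _ (Pth_mono hs _ _ _ hc) _ _ ?_) _ _
        (Pth_mono hs _ _ _ ha)
      exact Pth_star hk _ fun y hy => Pth_mono hs _ _ _ (hL y hy)

theorem PL_reg [Finite X] {σ : Type} (δ : σ → X → σ) {S : Set σ} (hS : S.Finite) :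
    ∀ p q, IsRegLang (PL δ S p q) := by
  induction S, hS using Set.Finite.induction_on with
  | empty =>
    intro p q
    apply IsRegLang.finite
    have : ({[]} ∪ Set.range (fun x : X => [x]) : Set (List X)).Finite :=
      (Set.finite_singleton _).union (Set.finite_range _)
    refine this.subset ?_
    rintro w hw
    cases w with
    | nil => simp
    | cons x w =>
      rcases hw with ⟨rfl, _⟩ | ⟨h, _⟩
      · simp
      · exact absurd h (Set.notMem_empty _)
  | insert _ _ ih =>
    intro p q
    rw [PL_insert]
    exact .union _ _ (ih _ _) (.concat _ _ (.concat _ _ (ih _ _) (.star _ (ih _ _))) (ih _ _))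

theorem Pth_iff {σ : Type} {δ : σ → X → σ} {S : Set σ} (hδ : ∀ p ∈ S, ∀ x, δ p x ∈ S)
    (w : List X) : ∀ p ∈ S, ∀ q, Pth δ S p w q ↔ w.foldl δ p = q := by
  induction w with
  | nil => intro p hp q; rfl
  | cons x w ih =>
    intro p hp q
    rw [List.foldl_cons, ← ih _ (hδ p hp x)]
    constructor
    · rintro (⟨rfl, h⟩ | ⟨_, h⟩)
      · exact h
      · exact h
    · exact fun h => Or.inr ⟨hδ p hp x, h⟩

theorem kleene [Finite X] {σ : Type} (δ : σ → X → σ) {S : Set σ} (hS : S.Finite)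
    (hδ : ∀ p ∈ S, ∀ x, δ p x ∈ S) (p : σ) (hp : p ∈ S) (q : σ) :
    IsRegLang ({w | w.foldl δ p = q} : Language X) := by
  have : ({w | w.foldl δ p = q} : Language X) = PL δ S p q := by
    ext w
    exact (Pth_iff hδ w p hp q).symm
  rw [this]
  exact PL_reg δ hS p q

/-! ### ω-words -/

theorem wcat_nil (η : ℕ → X) : wcat [] η = η := rfl

theorem wcat_cons_zero (a : X) (l : List X) (η : ℕ → X) : wcat (a :: l) η 0 = a := rfl

theorem wcat_cons_succ (a : X) (l : List X) (η : ℕ → X) (n : ℕ) :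
    wcat (a :: l) η (n + 1) = wcat l η n := rfl

theorem wcat_cons_eq {a b : X} {l m : List X} {η ζ : ℕ → X}
    (h : wcat (a :: l) η = wcat (b :: m) ζ) : a = b ∧ wcat l η = wcat m ζ :=
  ⟨congrFun h 0, funext fun n => congrFun h (n + 1)⟩

theorem wcat_append (u v : List X) (η : ℕ → X) : wcat (u ++ v) η = wcat u (wcat v η) := by
  induction u with
  | nil => rfl
  | cons a u ih =>
    funext n
    cases n with
    | zero => rfl
    | succ n => exact congrFun ih n

theorem wcat_split (u : List X) : ∀ (v : List X) (η ζ : ℕ → X), wcat u η = wcat v ζ →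
    u.length ≤ v.length → ∃ r, v = u ++ r ∧ η = wcat r ζ := by
  induction u with
  | nil => intro v η ζ h _; exact ⟨v, rfl, h⟩
  | cons a u ih =>
    intro v η ζ h hl
    cases v with
    | nil => simp at hl
    | cons b v =>
      obtain ⟨rfl, h'⟩ := wcat_cons_eq h
      obtain ⟨r, rfl, hr⟩ := ih v η ζ h' (by simpa using hl)
      exact ⟨r, rfl, hr⟩

theorem wcat_inj {u : List X} {η ζ : ℕ → X} (h : wcat u η = wcat u ζ) : η = ζ := by
  obtain ⟨r, hr, h⟩ := wcat_split u u η ζ h le_rfl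
  have : r = [] := by simpa using hr
  subst this
  exact h

theorem wcat_add (u : List X) (η : ℕ → X) (i : ℕ) : wcat u η (u.length + i) = η i := by
  induction u with
  | nil => simp [wcat_nil]
  | cons a u ih =>
    rw [List.length_cons, Nat.add_right_comm, wcat_cons_succ, ih]

theorem wcat_lt (u : List X) : ∀ (η ζ : ℕ → X) (i : ℕ), i < u.length →
    wcat u η i = wcat u ζ i := by
  induction u with
  | nil => intro η ζ i h; simp at h
  | cons a u ih =>
    intro η ζ i h
    cases i with
    | zero => rfl
    | succ i => exact ih η ζ i (by simpa using h)

def sl (ξ : ℕ → X) (a n : ℕ) : List X := (List.range n).map fun i => ξ (a + i)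

def tl (ξ : ℕ → X) (a : ℕ) : ℕ → X := fun i => ξ (a + i)

theorem sl_length (ξ : ℕ → X) (a n : ℕ) : (sl ξ a n).length = n := by simp [sl]

theorem sl_add (ξ : ℕ → X) (a n m : ℕ) : sl ξ a (n + m) = sl ξ a n ++ sl ξ (a + n) m := by
  simp [sl, List.range_add, Nat.add_assoc]

theorem wcat_sl (ξ : ℕ → X) (n : ℕ) : ∀ a, wcat (sl ξ a n) (tl ξ (a + n)) = tl ξ a := by
  induction n with
  | zero => intro a; rfl
  | succ n ih =>
    intro a
    rw [Nat.add_comm n 1, sl_add, wcat_append, ← Nat.add_assoc, ih (a + 1)]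
    funext i
    cases i with
    | zero => rfl
    | succ i =>
      have : sl ξ a 1 = [ξ a] := by simp [sl]
      rw [this, wcat_cons_succ, wcat_nil]
      simp only [tl]
      congr 1
      omega

theorem wcat_sl_zero (ξ : ℕ → X) (n : ℕ) : wcat (sl ξ 0 n) (tl ξ n) = ξ := by
  have := wcat_sl ξ n 0
  rw [Nat.zero_add] at this
  rw [this]
  funext i
  simp [tl]

theorem sl_wcat (u : List X) (η : ℕ → X) : sl (wcat u η) 0 u.length = u := by
  obtain ⟨r, hr, -⟩ := wcat_split u _ _ _ (wcat_sl_zero (wcat u η) u.length).symm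
    (by rw [sl_length])
  have h1 := congrArg List.length hr
  rw [sl_length, List.length_append] at h1
  have : r = [] := List.length_eq_zero_iff.1 (by omega)
  rw [hr, this, List.append_nil]

/-! ### powers -/

def fl (f : ℕ → List X) (k : ℕ) : List X := ((List.range k).map f).flatten

theorem fl_add (f : ℕ → List X) (k j : ℕ) : fl f (k + j) = fl f k ++ fl (fun i => f (k + i)) j := by
  simp [fl, List.range_add, Function.comp_def]

theorem fl_one (f : ℕ → List X) : fl f 1 = f 0 := by simp [fl]

theorem fl_length {f : ℕ → List X} (hf : ∀ i, f i ≠ []) (k : ℕ) : k ≤ (fl f k).length := by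
  induction k with
  | zero => simp
  | succ k ih =>
    rw [fl_add, fl_one, List.length_append]
    have := List.length_pos_iff.2 (hf (k + 0))
    omega

theorem omegaPow_tail {V : Language X} {f : ℕ → List X} (hf : ∀ i, f i ∈ V ∧ f i ≠ [])
    {ξ : ℕ → X} (h : ∀ k, ξ ∈ cyl (fl f k)) (k : ℕ) {ζ : ℕ → X} (hζ : ξ = wcat (fl f k) ζ) :
    ζ ∈ omegaPow V := by
  refine ⟨fun i => f (k + i), fun i => hf _, fun j => ?_⟩
  obtain ⟨η, hη⟩ := h (k + j)
  rw [fl_add, wcat_append, hζ] at hη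
  exact ⟨η, wcat_inj hη⟩

theorem omegaPow_cons {V : Language X} {v : List X} (hv : v ∈ V) {ζ : ℕ → X}
    (hζ : ζ ∈ omegaPow V) : wcat v ζ ∈ omegaPow V := by
  by_cases hne : v = []
  · subst hne; exact hζ
  obtain ⟨f, hf, h⟩ := hζ
  refine ⟨fun i => Nat.casesOn i v f, ?_, ?_⟩
  · intro i
    cases i with
    | zero => exact ⟨hv, hne⟩
    | succ i => exact hf i
  · intro k
    change wcat v ζ ∈ cyl (fl _ k)
    cases k with
    | zero => exact ⟨_, rfl⟩
    | succ k =>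
      rw [Nat.add_comm k 1, fl_add, fl_one]
      obtain ⟨η, hη⟩ := h k
      refine ⟨η, ?_⟩
      rw [wcat_append]
      congr 1
      rw [hη]
      congr 1
      simp only [fl]
      congr 2
      funext i
      rw [Nat.add_comm 1 i]

theorem omegaPow_star {V : Language X} {v : List X} (hv : v ∈ V∗) {ζ : ℕ → X}
    (hζ : ζ ∈ omegaPow V) : wcat v ζ ∈ omegaPow V := by
  obtain ⟨L, rfl, hL⟩ := Language.mem_kstar.1 hv
  clear hv
  induction L with
  | nil => exact hζ
  | cons a L ih =>
    rw [List.flatten_cons, wcat_append]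
    exact omegaPow_cons (hL a (by simp)) (ih fun y hy => hL y (by simp [hy]))

theorem fl_star {V : Language X} {f : ℕ → List X} (hf : ∀ i, f i ∈ V) (k : ℕ) :
    fl f k ∈ V∗ := by
  apply Language.join_mem_kstar
  intro y hy
  obtain ⟨i, _, rfl⟩ := List.mem_map.1 hy
  exact hf i

def res (E : Set (ℕ → X)) (w : List X) : Set (ℕ → X) := {η | wcat w η ∈ E}

theorem res_catOmega (W V : Language X) (w : List X) :
    res (catOmega W (omegaPow V)) w = catOmega ((W * V∗).leftQuotient w) (omegaPow V) := by
  ext η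
  constructor
  · rintro ⟨a, ha, ζ, hζ, h⟩
    obtain ⟨f, hf, hc⟩ := hζ
    obtain ⟨θ, hθ⟩ := hc w.length
    change ζ = wcat (fl f w.length) θ at hθ
    rw [hθ, ← wcat_append] at h
    obtain ⟨r, hr, hη⟩ := wcat_split _ _ _ _ h (by
      have := fl_length (fun i => (hf i).2) w.length
      rw [List.length_append]; omega)
    refine ⟨r, ?_, θ, omegaPow_tail hf hc _ hθ, hη⟩
    rw [Language.mem_leftQuotient, ← hr]
    exact Language.append_mem_mul ha (fl_star (fun i => (hf i).1) _)
  · rintro ⟨r, hr, θ, hθ, rfl⟩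
    obtain ⟨a, ha, b, hb, hab⟩ := Language.mem_mul.1 hr
    refine ⟨a, ha, wcat b θ, omegaPow_star hb hθ, ?_⟩
    rw [← wcat_append, ← wcat_append, hab]

theorem finite_res {E : Set (ℕ → X)} (hE : IsRegOmega E) : (Set.range (res E)).Finite := by
  obtain ⟨n, W, V, hWV, rfl⟩ := hE
  have h1 : ∀ i, (Set.range ((W i) * (V i)∗).leftQuotient).Finite := fun i =>
    finite_quot (.concat _ _ (hWV i).1 (.star _ (hWV i).2))
  have h2 := Set.Finite.pi' h1
  refine (h2.image fun q => ⋃ i, catOmega (q i) (omegaPow (V i))).subset ?_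
  rintro _ ⟨w, rfl⟩
  refine ⟨fun i => (W i * (V i)∗).leftQuotient w, fun i => ⟨w, rfl⟩, ?_⟩
  simp only [← res_catOmega]
  ext η
  simp [res]

theorem regOmega_single {W V : Language X} (hW : IsRegLang W) (hV : IsRegLang V) :
    IsRegOmega (catOmega W (omegaPow V)) :=
  ⟨1, fun _ => W, fun _ => V, fun _ => ⟨hW, hV⟩, by rw [Set.iUnion_const]⟩

theorem regOmega_empty : IsRegOmega (∅ : Set (ℕ → X)) :=
  ⟨0, fun _ => 0, fun _ => 0, fun i => i.elim0, by simp⟩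

theorem regOmega_union {E F : Set (ℕ → X)} (hE : IsRegOmega E) (hF : IsRegOmega F) :
    IsRegOmega (E ∪ F) := by
  obtain ⟨n, W, V, h, rfl⟩ := hE
  obtain ⟨m, W', V', h', rfl⟩ := hF
  refine ⟨n + m, Fin.append W W', Fin.append V V', ?_, ?_⟩
  · intro i
    refine Fin.addCases (fun i => ?_) (fun i => ?_) i
    · simpa using h i
    · simpa using h' i
  · ext ξ
    simp only [Set.mem_union, Set.mem_iUnion]
    constructor
    · rintro (⟨i, hi⟩ | ⟨i, hi⟩)
      · exact ⟨Fin.castAdd m i, by simpa using hi⟩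
      · exact ⟨Fin.natAdd n i, by simpa using hi⟩
    · rintro ⟨i, hi⟩
      induction i using Fin.addCases with
      | left i => exact Or.inl ⟨i, by simpa using hi⟩
      | right i => exact Or.inr ⟨i, by simpa using hi⟩

theorem regOmega_biUnion {ι : Type} {S : Set ι} (hS : S.Finite) (A : ι → Set (ℕ → X))
    (h : ∀ s ∈ S, IsRegOmega (A s)) : IsRegOmega (⋃ s ∈ S, A s) := by
  induction S, hS using Set.Finite.induction_on with
  | empty => simpa using regOmega_empty
  | insert _ _ ih =>
    rw [Set.biUnion_insert]
    exact regOmega_union (h _ (Set.mem_insert _ _)) (ih fun s hs => h s (Set.mem_insert_of_mem _ hs))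

/-! ### the residual automaton -/

theorem res_append (E : Set (ℕ → X)) (u v : List X) : res E (u ++ v) = res (res E u) v := by
  ext η
  simp only [res, Set.mem_setOf_eq, wcat_append]

def dl (E : Set (ℕ → X)) (x : X) : Set (ℕ → X) := res E [x]

theorem foldl_dl (w : List X) : ∀ E : Set (ℕ → X), w.foldl dl E = res E w := by
  induction w with
  | nil => intro E; rfl
  | cons x w ih =>
    intro E
    rw [List.foldl_cons, ih, dl, ← res_append]
    rfl

theorem reg_res [Finite X] {E : Set (ℕ → X)} (hE : (Set.range (res E)).Finite)
    (p : Set (ℕ → X)) (hp : p ∈ Set.range (res E)) (q : Set (ℕ → X)) :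
    IsRegLang ({w | res p w = q} : Language X) := by
  have := kleene (dl (X := X)) hE ?_ p hp q
  · simpa only [foldl_dl] using this
  · rintro _ ⟨w, rfl⟩ x
    exact ⟨w ++ [x], res_append _ _ _⟩

def AA (E s : Set (ℕ → X)) : Set (ℕ → X) :=
  catOmega ({w | res E w = s} : Language X) (omegaPow ({w | res s w = s} : Language X))

theorem reg_AA [Finite X] {E : Set (ℕ → X)} (hE : (Set.range (res E)).Finite)
    (s : Set (ℕ → X)) (hs : s ∈ Set.range (res E)) : IsRegOmega (AA E s) :=
  regOmega_single (reg_res hE E ⟨[], rfl⟩ s) (reg_res hE s hs s)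

theorem mem_AA {E s : Set (ℕ → X)} {ξ : ℕ → X} :
    ξ ∈ AA E s ↔ ∃ᶠ n in Filter.atTop, res E (sl ξ 0 n) = s := by
  constructor
  · rintro ⟨w, hw, ζ, ⟨f, hf, hc⟩, rfl⟩
    rw [Filter.frequently_atTop]
    intro a
    obtain ⟨θ, hθ⟩ := hc a
    change ζ = wcat (fl f a) θ at hθ
    refine ⟨(w ++ fl f a).length, ?_, ?_⟩
    · have := fl_length (fun i => (hf i).2) a
      rw [List.length_append]; omega
    · rw [hθ, ← wcat_append, sl_wcat, res_append]
      have hw' : res E w = s := hw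
      rw [hw']
      clear hθ
      induction a with
      | zero => rfl
      | succ a ih =>
        obtain ⟨θ', hθ'⟩ := hc a
        rw [fl_add, fl_one, res_append, ih]
        exact (hf (a + 0)).1
  · intro h
    obtain ⟨φ, hφ, hs⟩ := Filter.extraction_of_frequently_atTop h
    refine ⟨sl ξ 0 (φ 0), hs 0, tl ξ (φ 0), ⟨fun i => sl ξ (φ i) (φ (i + 1) - φ i), ?_, ?_⟩,
      (wcat_sl_zero _ _).symm⟩
    · intro i
      have hlt := hφ (Nat.lt_add_one i)
      constructor
      · have h1 := hs (i + 1)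
        have e : φ (i + 1) = φ i + (φ (i + 1) - φ i) := by omega
        rw [e, sl_add, res_append, hs i, Nat.zero_add] at h1
        exact h1
      · intro h0
        have := congrArg List.length h0
        rw [sl_length, List.length_nil] at this
        omega
    · intro k
      have key : ∀ k, fl (fun i => sl ξ (φ i) (φ (i + 1) - φ i)) k = sl ξ (φ 0) (φ k - φ 0) := by
        intro k
        induction k with
        | zero => simp [fl, sl]
        | succ k ih =>
          have h1 := hφ.monotone (Nat.zero_le k)
          have h2 := hφ (Nat.lt_add_one k)
          rw [fl_add, fl_one, ih]
          have e : φ (k + 1) - φ 0 = (φ k - φ 0) + (φ (k + 1) - φ k) := by omega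
          have e2 : φ 0 + (φ k - φ 0) = φ k := by omega
          rw [e, sl_add, e2]
          rfl
      change _ ∈ cyl (fl _ k)
      rw [key]
      exact ⟨_, (wcat_sl _ _ _).symm⟩

theorem res_sl_mono {E : Set (ℕ → X)} {ξ : ℕ → X} {n m : ℕ} (h : n ≤ m) {s : Set (ℕ → X)}
    (hs : ∀ w, res s w = s) (hn : res E (sl ξ 0 n) = s) : res E (sl ξ 0 m) = s := by
  obtain ⟨d, rfl⟩ := Nat.exists_eq_add_of_le h
  rw [sl_add, res_append, hn, hs]

theorem res_empty (w : List X) : res (∅ : Set (ℕ → X)) w = ∅ := rfl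
theorem res_univ (w : List X) : res (Set.univ : Set (ℕ → X)) w = Set.univ := rfl

/-! ### topology -/

theorem cyl_eq (ξ : ℕ → X) (n : ℕ) : cyl (sl ξ 0 n) = PiNat.cylinder (E := fun _ => X) ξ n := by
  ext η
  constructor
  · rintro ⟨ζ, rfl⟩ i hi
    have : ξ i = wcat (sl ξ 0 n) (tl ξ n) i := by rw [wcat_sl_zero]
    rw [this]
    exact wcat_lt _ _ _ _ (by rwa [sl_length])
  · intro h
    have : sl ξ 0 n = sl η 0 n := by
      simp only [sl]
      refine List.map_congr_left fun i hi => ?_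
      rw [Nat.zero_add]
      exact (h i (List.mem_range.1 hi)).symm
    rw [this]
    exact ⟨_, (wcat_sl_zero _ _).symm⟩

theorem isOpen_cyl (ξ : ℕ → X) (n : ℕ) : @IsOpen _ (cantorTop X) (cyl (sl ξ 0 n)) := by
  letI : TopologicalSpace X := ⊥
  haveI : DiscreteTopology X := ⟨rfl⟩
  rw [cyl_eq]
  exact PiNat.isOpen_cylinder (fun _ => X) ξ n

theorem exists_cyl {U : Set (ℕ → X)} (hU : @IsOpen _ (cantorTop X) U) {ξ : ℕ → X} (h : ξ ∈ U) :
    ∃ n, cyl (sl ξ 0 n) ⊆ U := by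
  letI : TopologicalSpace X := ⊥
  haveI : DiscreteTopology X := ⟨rfl⟩
  obtain ⟨_, ⟨x, n, rfl⟩, h1, h2⟩ :=
    (PiNat.isTopologicalBasis_cylinders (fun _ => X)).exists_subset_of_mem_open h hU
  refine ⟨n, ?_⟩
  rw [cyl_eq, PiNat.mem_cylinder_iff_eq.1 h1]
  exact h2

theorem mem_cyl_self (ξ : ℕ → X) (n : ℕ) : ξ ∈ cyl (sl ξ 0 n) := ⟨_, (wcat_sl_zero _ _).symm⟩

theorem res_eq_univ {E : Set (ℕ → X)} {w : List X} : res E w = Set.univ ↔ cyl w ⊆ E := by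
  rw [Set.eq_univ_iff_forall]
  constructor
  · rintro h _ ⟨η, rfl⟩; exact h η
  · intro h η; exact h ⟨η, rfl⟩

theorem res_eq_empty {E : Set (ℕ → X)} {w : List X} : res E w = ∅ ↔ Disjoint (cyl w) E := by
  rw [Set.eq_empty_iff_forall_notMem, Set.disjoint_left]
  constructor
  · rintro h _ ⟨η, rfl⟩; exact h η
  · intro h η; exact h ⟨η, rfl⟩

theorem mem_iff_of_open {E : Set (ℕ → X)} (hE : @IsOpen _ (cantorTop X) E) {ξ : ℕ → X} :
    ξ ∈ E ↔ ∃ n, res E (sl ξ 0 n) = Set.univ := by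
  simp only [res_eq_univ]
  exact ⟨exists_cyl hE, fun ⟨n, hn⟩ => hn (mem_cyl_self _ _)⟩

theorem notMem_closure {E : Set (ℕ → X)} {ξ : ℕ → X} :
    ξ ∉ @closure _ (cantorTop X) E ↔ ∃ n, res E (sl ξ 0 n) = ∅ := by
  letI := cantorTop X
  simp only [res_eq_empty]
  constructor
  · intro h
    obtain ⟨n, hn⟩ := exists_cyl (U := (closure E)ᶜ) isClosed_closure.isOpen_compl h
    exact ⟨n, (Set.disjoint_left.2 fun η h1 h2 => hn h1 (subset_closure h2))⟩
  · rintro ⟨n, hn⟩ h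
    obtain ⟨η, h1, h2⟩ := mem_closure_iff.1 h _ (isOpen_cyl ξ n) (mem_cyl_self _ _)
    exact Set.disjoint_left.1 hn h1 h2

theorem ext_eq (E : Set (ℕ → X)) : (@closure _ (cantorTop X) E)ᶜ = AA E ∅ := by
  ext ξ
  rw [Set.mem_compl_iff, notMem_closure, mem_AA]
  constructor
  · rintro ⟨n, hn⟩
    exact (Filter.eventually_atTop.2 ⟨n, fun m hm => res_sl_mono hm res_empty hn⟩).frequently
  · exact fun h => h.exists

theorem front_eq {E : Set (ℕ → X)} (hE : @IsOpen _ (cantorTop X) E)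
    (hfin : (Set.range (res E)).Finite) :
    @closure _ (cantorTop X) E \ E = ⋃ s ∈ Set.range (res E) \ {∅, Set.univ}, AA E s := by
  ext ξ
  rw [Set.mem_diff, ← not_not (a := ξ ∈ @closure _ (cantorTop X) E), notMem_closure,
    mem_iff_of_open hE]
  simp only [Set.mem_iUnion, mem_AA]
  constructor
  · rintro ⟨h1, h2⟩
    have : ∃ s ∈ Set.range (res E), ∃ᶠ n in Filter.atTop, res E (sl ξ 0 n) = s := by
      by_contra! hcon
      have h3 : ∀ᶠ n in Filter.atTop, ∀ s ∈ Set.range (res E), res E (sl ξ 0 n) ≠ s := by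
        rw [Filter.eventually_all_finite hfin]
        intro s hs
        exact hcon s hs
      obtain ⟨n, hn⟩ := h3.exists
      exact hn _ ⟨_, rfl⟩ rfl
    obtain ⟨s, hs, hf⟩ := this
    refine ⟨s, ⟨hs, ?_⟩, hf⟩
    obtain ⟨n, hn⟩ := hf.exists
    rintro (rfl | rfl)
    · exact h1 ⟨n, hn⟩
    · exact h2 ⟨n, hn⟩
  · rintro ⟨s, ⟨_, hs⟩, hf⟩
    rw [Filter.frequently_atTop] at hf
    constructor
    · rintro ⟨n, hn⟩
      obtain ⟨m, hm, h⟩ := hf n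
      exact hs (Or.inl (h.symm.trans (res_sl_mono hm res_empty hn)))
    · rintro ⟨n, hn⟩
      obtain ⟨m, hm, h⟩ := hf n
      exact hs (Or.inr (h.symm.trans (res_sl_mono hm res_univ hn)))

theorem reg_ext [Finite X] {E : Set (ℕ → X)} (hE : IsRegOmega E) :
    IsRegOmega (@closure _ (cantorTop X) E)ᶜ := by
  rw [ext_eq]
  by_cases h : ∅ ∈ Set.range (res E)
  · exact reg_AA (finite_res hE) _ h
  · have : AA E ∅ = ∅ := by
      rw [Set.eq_empty_iff_forall_notMem]
      intro ξ hξ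
      obtain ⟨n, hn⟩ := (mem_AA.1 hξ).exists
      exact h ⟨_, hn⟩
    rw [this]
    exact regOmega_empty

theorem meagre_front {E : Set (ℕ → X)} (hE : @IsOpen _ (cantorTop X) E) :
    @IsMeagre _ (cantorTop X) (@closure _ (cantorTop X) E \ E) := by
  letI := cantorTop X
  have h : closure E \ E = frontier E := hE.frontier_eq.symm
  rw [h]
  apply IsNowhereDense.isMeagre
  rw [isClosed_frontier.isNowhereDense_iff]
  rw [← frontier_compl]
  exact interior_frontier hE.isClosed_compl

theorem abp_compl [Finite X] {F : Set (ℕ → X)} (hF : HasABP F) : HasABP (Set.univ \ F) := by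
  obtain ⟨E, F', h1, h2, h3, h4, h5⟩ := hF
  refine ⟨(@closure _ (cantorTop X) E)ᶜ, F' ∪ (@closure _ (cantorTop X) E \ E), reg_ext h1, ?_,
    regOmega_union h3 ?_, ?_, ?_⟩
  · letI := cantorTop X
    exact isClosed_closure.isOpen_compl
  · rw [front_eq h2 (finite_res h1)]
    exact regOmega_biUnion ((finite_res h1).subset Set.diff_subset) _
      fun s hs => reg_AA (finite_res h1) s hs.1
  · exact @IsMeagre.union _ (cantorTop X) _ _ h4 (meagre_front h2)
  · have hsub : E ⊆ @closure _ (cantorTop X) E := @subset_closure _ (cantorTop X) E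
    intro ξ hξ
    by_cases hx : ξ ∈ symmDiff F E
    · exact Or.inl (h5 hx)
    · right
      have := @hsub ξ
      simp only [Set.mem_symmDiff, Set.mem_diff, Set.mem_univ, Set.mem_compl_iff] at *
      tauto

theorem abp_union {F G : Set (ℕ → X)} (hF : HasABP F) (hG : HasABP G) : HasABP (F ∪ G) := by
  obtain ⟨E, F', h1, h2, h3, h4, h5⟩ := hF
  obtain ⟨D, G', k1, k2, k3, k4, k5⟩ := hG
  refine ⟨E ∪ D, F' ∪ G', regOmega_union h1 k1, @IsOpen.union _ _ _ (cantorTop X) h2 k2,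
    regOmega_union h3 k3, @IsMeagre.union _ (cantorTop X) _ _ h4 k4, ?_⟩
  intro ξ hξ
  have a := @h5 ξ
  have b := @k5 ξ
  simp only [Set.mem_symmDiff, Set.mem_union] at *
  tauto

theorem stmt10 {X : Type} [Fintype X] (hX : 2 ≤ Fintype.card X)
    (F G : Set (ℕ → X)) (hF : HasABP F) (hG : HasABP G) :
    HasABP (F ∪ G) ∧ HasABP (F ∩ G) ∧ HasABP (Set.univ \ F) := by
  refine ⟨abp_union hF hG, ?_, abp_compl hF⟩
  have := abp_compl (abp_union (abp_compl hF) (abp_compl hG))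
  have e : F ∩ G = Set.univ \ ((Set.univ \ F) ∪ (Set.univ \ G)) := by
    ext ξ
    simp
  rw [e]
  exact this

end AutoBaire
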